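/- arXiv:1212.4915 — 2 statements merged into one kernel-verified Lean document; each statement's English description precedes it below -/
import Mathlib

section
/- Theorem 1(i) (first-order condition for Nash equilibrium of the two-stage pricing game): Let d, e be positive reals and c = d + e. Let o, C_ISP, C_CP, F_ad : ℝ → ℝ be differentiable and let h : ℝ → ℝ be differentiable with h(o(v)) = v for all v and o(h(u)) = u for all u. Suppose (p_b*, p_s*) is an interior Nash equilibrium, i.e. the function p_b ↦ U_ISP(p_b, p_s*) has a local maximum at p_b* and the function p_s ↦ U_CP(p_b*, p_s) has a local maximum at p_s*. Set v* = h(d·p_b* + p_s*). Then o(v*) + Φ₁(v*) + Φ₂(v*) = 0. -/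
/-- Theorem 1(i): first-order condition for an interior Nash equilibrium of the
two-stage pricing game between the ISP and the CP. -/
theorem theorem1_first_order_condition
    (d e c : ℝ) (hd : 0 < d) (he : 0 < e) (hc : c = d + e)
    (o C_ISP C_CP F_ad h : ℝ → ℝ)
    (ho : Differentiable ℝ o) (hC_ISP : Differentiable ℝ C_ISP)
    (hC_CP : Differentiable ℝ C_CP) (hF_ad : Differentiable ℝ F_ad)
    (hh : Differentiable ℝ h)
    (hinv₁ : ∀ v : ℝ, h (o v) = v) (hinv₂ : ∀ u : ℝ, o (h u) = u)
    (U_ISP U_CP : ℝ → ℝ → ℝ)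
    (hU_ISP : ∀ p_b p_s : ℝ,
      U_ISP p_b p_s = c * h (d * p_b + p_s) * p_b - C_ISP (h (d * p_b + p_s)))
    (hU_CP : ∀ p_b p_s : ℝ,
      U_CP p_b p_s = h (d * p_b + p_s) * p_s + F_ad (h (d * p_b + p_s))
        - e * h (d * p_b + p_s) * p_b - C_CP (h (d * p_b + p_s)))
    (Φ₁ Φ₂ : ℝ → ℝ)
    (hΦ₁ : ∀ v : ℝ, Φ₁ v = c * v * (1 / d) * deriv o v - deriv C_ISP v)
    (hΦ₂ : ∀ v : ℝ, Φ₂ v = v * deriv o v + deriv F_ad v - deriv C_CP v)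
    (p_b' p_s' : ℝ)
    (hmaxISP : IsLocalMax (fun p_b => U_ISP p_b p_s') p_b')
    (hmaxCP : IsLocalMax (fun p_s => U_CP p_b' p_s) p_s')
    (v' : ℝ) (hv' : v' = h (d * p_b' + p_s')) :
    o v' + Φ₁ v' + Φ₂ v' = 0 := by
  have hov : o v' = d * p_b' + p_s' := by rw [hv', hinv₂]
  have hH : HasDerivAt h (deriv h (d * p_b' + p_s')) (d * p_b' + p_s') := (hh _).hasDerivAt
  have hO : HasDerivAt o (deriv o v') (h (d * p_b' + p_s')) := hv' ▸ (ho _).hasDerivAt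
  have hI : HasDerivAt C_ISP (deriv C_ISP v') (h (d * p_b' + p_s')) :=
    hv' ▸ (hC_ISP _).hasDerivAt
  have hP : HasDerivAt C_CP (deriv C_CP v') (h (d * p_b' + p_s')) :=
    hv' ▸ (hC_CP _).hasDerivAt
  have hF : HasDerivAt F_ad (deriv F_ad v') (h (d * p_b' + p_s')) :=
    hv' ▸ (hF_ad _).hasDerivAt
  have hmul : deriv o v' * deriv h (d * p_b' + p_s') = 1 := by
    have h1 := hO.comp _ hH
    have h2 : o ∘ h = id := funext hinv₂
    rw [h2] at h1
    exact h1.unique (hasDerivAt_id _)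
  have hlb : HasDerivAt (fun x : ℝ => d * x + p_s') d p_b' := by
    simpa using ((hasDerivAt_id p_b').const_mul d).add_const p_s'
  have hls : HasDerivAt (fun x : ℝ => d * p_b' + x) 1 p_s' := by
    simpa using (hasDerivAt_id p_s').const_add (d * p_b')
  have hHb := HasDerivAt.comp p_b' (h₂ := h) hH hlb
  have hHs := HasDerivAt.comp p_s' (h₂ := h) hH hls
  have e1 := hmaxISP.hasDerivAt_eq_zero (by
    simp only [hU_ISP]
    exact ((hHb.const_mul c).mul (hasDerivAt_id p_b')).sub
      (HasDerivAt.comp p_b' (h₂ := C_ISP) hI hHb))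
  have e2 := hmaxCP.hasDerivAt_eq_zero (by
    simp only [hU_CP]
    exact (((hHs.mul (hasDerivAt_id p_s')).add
      (HasDerivAt.comp p_s' (h₂ := F_ad) hF hHs)).sub
      ((hHs.const_mul e).mul_const p_b')).sub (HasDerivAt.comp p_s' (h₂ := C_CP) hP hHs))
  simp only [Function.comp, id, ← hv', mul_one] at e1 e2
  rw [hov, hΦ₁, hΦ₂]
  generalize deriv h (d * p_b' + p_s') = k at *
  generalize deriv o v' = m at *
  have hdd : d * (1 / d) = 1 := by field_simp
  subst hc
  generalize 1 / d = r at *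
  linear_combination (m * r) * e1 + m * e2 +
    (-(d + e) * p_b' * (d * r) + deriv C_ISP v' * (d * r)
      - p_s' - deriv F_ad v' + e * p_b' + deriv C_CP v') * hmul +
    (-(d + e) * p_b' + deriv C_ISP v') * hdd
end

section
/- Theorem 1(ii) (second-order condition for Nash equilibrium of the two-stage pricing game): Let d, e be positive reals and c = d + e. Let o, C_ISP, C_CP, F_ad : ℝ → ℝ be twice differentiable and let h : ℝ → ℝ be twice differentiable with h(o(v)) = v for all v and o(h(u)) = u for all u. Suppose (p_b*, p_s*) satisfies the strict interior optimality conditions: the first derivative of p_b ↦ U_ISP(p_b, p_s*) vanishes at p_b* and its second derivative at p_b* is negative, and the first derivative of p_s ↦ U_CP(p_b*, p_s) vanishes at p_s* and its second derivative at p_s* is negative. Set v* = h(d·p_b* + p_s*). Then (c/d)·(deriv o v*) + (deriv Φ₁ v*) < 0 and (deriv o v*) + (deriv Φ₂ v*) < 0. -/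
theorem aux_second (o h Φ f : ℝ → ℝ) (k l m n x : ℝ) (hk : 0 < k)
    (hh : Differentiable ℝ h) (hh' : Differentiable ℝ (deriv h)) (hΦ : Differentiable ℝ Φ)
    (hm : ∀ u, deriv o (h u) * deriv h u = 1)
    (hf : ∀ y, HasDerivAt f (k * deriv h (k * y + n) * (Φ (h (k * y + n)) + (l * y + m))) y)
    (h1 : deriv f x = 0) (h2 : deriv (deriv f) x < 0) :
    (l / k) * deriv o (h (k * x + n)) + deriv Φ (h (k * x + n)) < 0 := by
  have e : deriv f = fun y => k * deriv h (k * y + n) * (Φ (h (k * y + n)) + (l * y + m)) :=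
    funext fun y => (hf y).deriv
  have hu : HasDerivAt (fun y : ℝ => k * y + n) k x := by
    simpa using ((hasDerivAt_id x).const_mul k).add_const n
  have hl : HasDerivAt (fun y : ℝ => l * y + m) l x := by
    simpa using ((hasDerivAt_id x).const_mul l).add_const m
  have hhu := HasDerivAt.comp x (hh (k * x + n)).hasDerivAt hu
  have hhu' := HasDerivAt.comp x (hh' (k * x + n)).hasDerivAt hu
  have hΦu := HasDerivAt.comp x (hΦ (h (k * x + n))).hasDerivAt hhu
  have key := ((hhu'.const_mul k).mul (hΦu.add hl)).deriv
  have hm' := hm (k * x + n)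
  rw [e] at h1 h2
  change deriv (fun y => k * deriv h (k * y + n) * (Φ (h (k * y + n)) + (l * y + m))) x = _ at key
  rw [key] at h2
  simp only [Function.comp, Pi.add_apply] at h1 h2
  generalize deriv h (k * x + n) = a at *
  generalize deriv o (h (k * x + n)) = b at *
  generalize deriv Φ (h (k * x + n)) = P at *
  have ha : a ≠ 0 := by rintro rfl; simp at hm'
  have hB : Φ (h (k * x + n)) + (l * x + m) = 0 := by
    rcases mul_eq_zero.1 h1 with h | h
    · exact absurd h (mul_ne_zero hk.ne' ha)
    · exact h
  rw [hB, mul_zero, zero_add] at h2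
  have : k * a * (P * (a * k) + l) = (k * a) ^ 2 * (l / k * b + P) := by
    have : (k * a) ^ 2 * (l / k * b + P) = k * a * (l * (b * a) + P * (a * k)) := by
      field_simp
    rw [this, hm']; ring
  rw [this] at h2
  have hp : 0 < (k * a) ^ 2 := by positivity
  by_contra hc
  push Not at hc
  nlinarith [mul_nonneg hp.le hc]

/-- Theorem 1(ii): second-order condition for an interior Nash equilibrium of the
two-stage pricing game between the ISP and the CP. -/
theorem theorem1_second_order_condition
    (d e c : ℝ) (hd : 0 < d) (he : 0 < e) (hc : c = d + e)
    (o C_ISP C_CP F_ad h : ℝ → ℝ)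
    (ho : Differentiable ℝ o) (ho' : Differentiable ℝ (deriv o))
    (hC_ISP : Differentiable ℝ C_ISP) (hC_ISP' : Differentiable ℝ (deriv C_ISP))
    (hC_CP : Differentiable ℝ C_CP) (hC_CP' : Differentiable ℝ (deriv C_CP))
    (hF_ad : Differentiable ℝ F_ad) (hF_ad' : Differentiable ℝ (deriv F_ad))
    (hh : Differentiable ℝ h) (hh' : Differentiable ℝ (deriv h))
    (hinv₁ : ∀ v : ℝ, h (o v) = v) (hinv₂ : ∀ u : ℝ, o (h u) = u)
    (U_ISP U_CP : ℝ → ℝ → ℝ)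
    (hU_ISP : ∀ p_b p_s : ℝ,
      U_ISP p_b p_s = c * h (d * p_b + p_s) * p_b - C_ISP (h (d * p_b + p_s)))
    (hU_CP : ∀ p_b p_s : ℝ,
      U_CP p_b p_s = h (d * p_b + p_s) * p_s + F_ad (h (d * p_b + p_s))
        - e * h (d * p_b + p_s) * p_b - C_CP (h (d * p_b + p_s)))
    (Φ₁ Φ₂ : ℝ → ℝ)
    (hΦ₁ : ∀ v : ℝ, Φ₁ v = c * v * (1 / d) * deriv o v - deriv C_ISP v)
    (hΦ₂ : ∀ v : ℝ, Φ₂ v = v * deriv o v + deriv F_ad v - deriv C_CP v)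
    (p_b' p_s' : ℝ)
    (hfoISP : deriv (fun p_b => U_ISP p_b p_s') p_b' = 0)
    (hsoISP : deriv (deriv (fun p_b => U_ISP p_b p_s')) p_b' < 0)
    (hfoCP : deriv (fun p_s => U_CP p_b' p_s) p_s' = 0)
    (hsoCP : deriv (deriv (fun p_s => U_CP p_b' p_s)) p_s' < 0)
    (v' : ℝ) (hv' : v' = h (d * p_b' + p_s')) :
    (c / d) * deriv o v' + deriv Φ₁ v' < 0 ∧
    deriv o v' + deriv Φ₂ v' < 0 := by
  have hm : ∀ u, deriv o (h u) * deriv h u = 1 := by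
    intro u
    have h1 := (HasDerivAt.comp u (ho (h u)).hasDerivAt (hh u).hasDerivAt)
    have h2 : o ∘ h = id := funext hinv₂
    rw [h2] at h1
    exact h1.unique (hasDerivAt_id u)
  have eΦ₁ : Φ₁ = fun v => c * v * (1 / d) * deriv o v - deriv C_ISP v := funext hΦ₁
  have eΦ₂ : Φ₂ = fun v => v * deriv o v + deriv F_ad v - deriv C_CP v := funext hΦ₂
  have dΦ₁ : Differentiable ℝ Φ₁ := by rw [eΦ₁]; fun_prop
  have dΦ₂ : Differentiable ℝ Φ₂ := by rw [eΦ₂]; fun_prop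
  subst hv'
  constructor
  · refine aux_second o h Φ₁ _ d c 0 p_s' p_b' hd hh hh' dΦ₁ hm ?_ hfoISP hsoISP
    intro y
    have e1 : (fun p_b => U_ISP p_b p_s') = fun p_b =>
      c * h (d * p_b + p_s') * p_b - C_ISP (h (d * p_b + p_s')) := funext fun _ => hU_ISP _ _
    rw [e1]
    have hu : HasDerivAt (fun y : ℝ => d * y + p_s') d y := by
      simpa using ((hasDerivAt_id y).const_mul d).add_const p_s'
    have hhu := HasDerivAt.comp y (hh (d * y + p_s')).hasDerivAt hu
    have hC := HasDerivAt.comp y (hC_ISP (h (d * y + p_s'))).hasDerivAt hhu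
    refine (((hhu.const_mul c).mul (hasDerivAt_id y)).sub hC).congr_deriv ?_
    have := hm (d * y + p_s')
    simp only [hΦ₁, Function.comp, id]
    field_simp
    linear_combination (-c * h (d * y + p_s')) * this
  · have key := aux_second o h Φ₂ (fun p_s => U_CP p_b' p_s) 1 1 (-e * p_b') (d * p_b') p_s'
      one_pos hh hh' dΦ₂ hm ?_ hfoCP hsoCP
    · simpa [add_comm] using key
    intro y
    have e1 : (fun p_s => U_CP p_b' p_s) = fun p_s =>
      h (1 * p_s + d * p_b') * p_s + F_ad (h (1 * p_s + d * p_b'))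
        - e * h (1 * p_s + d * p_b') * p_b' - C_CP (h (1 * p_s + d * p_b')) := by
      funext p
      rw [hU_CP, one_mul, add_comm p]
    rw [e1]
    have hu : HasDerivAt (fun y : ℝ => 1 * y + d * p_b') 1 y := by
      simpa using (hasDerivAt_id y).add_const (d * p_b')
    have hhu := HasDerivAt.comp y (hh (1 * y + d * p_b')).hasDerivAt hu
    have hC := HasDerivAt.comp y (hC_CP (h (1 * y + d * p_b'))).hasDerivAt hhu
    have hF := HasDerivAt.comp y (hF_ad (h (1 * y + d * p_b'))).hasDerivAt hhu
    refine ((((hhu.mul (hasDerivAt_id y)).add hF).sub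
      ((hhu.const_mul e).mul_const p_b')).sub hC).congr_deriv ?_
    have := hm (1 * y + d * p_b')
    simp only [hΦ₂, Function.comp, id]
    linear_combination (-h (1 * y + d * p_b')) * this
end
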